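/- Let V be a finite set with at least two elements, w : V × V → ℝ≥0 a symmetric weight function with w(v,v) = 0, s ∈ V a designated source, and h : V∖{s} → ℕ an injective ordering. Let S* be the unique nonempty subset of V∖{s} lexicographically minimizing (cut(S), LN(S), |S|). Let 𝒫 be a partition of V such that S* is a union of blocks of 𝒫, and for blocks B with s ∉ B set h_H(B) = min_{x ∈ B} h(x) and P_H(B) = |B|. Then ℱ* = {B ∈ 𝒫 : B ⊆ S*} is the unique nonempty collection ℱ ⊆ 𝒫 with s ∉ ∪ℱ that lexicographically minimizes (cut_H(ℱ), min_{B ∈ ℱ} h_H(B), Σ_{B ∈ ℱ} P_H(B)) over all such collections, and ∪ℱ* = S*. -/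

import Mathlib

/-!
Taking unions, `ℱ ↦ ⋃ ℱ`, identifies the collections of blocks of a partition with the vertex sets
that are unions of blocks. This identification is injective and preserves the whole tuple
(`hTuple_eq`): the cut value because the complement of `⋃ ℱ` is the union of the remaining blocks,
the lexicographic number because a minimum may be taken blockwise, and the size because blocks are
disjoint. Hence `ℱ*`, whose union is `S*`, is a minimizer in the contraction.

For uniqueness, a minimizing `ℱ` has a union `T` with the same tuple as `S*`, so it suffices that
`S*` is the only minimizer in the original graph (`eq_of_minimizers`). Two minimizers share the
vertex realizing their common lexicographic number, since `h` is injective away from `s`. By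
submodularity of the cut function (`cutVal_inter_add_union_le`) their intersection is again a
minimum cut; it contains that vertex, so it has the same lexicographic number, and minimality of
the size forces it to be all of both sets.
-/

open Finset

/-- The cut value of a set `S`: total weight of edges with exactly one endpoint in `S`. -/
noncomputable def cutVal {V : Type*} [Fintype V] [DecidableEq V]
    (w : V → V → NNReal) (S : Finset V) : NNReal :=
  ∑ u ∈ S, ∑ v ∈ Sᶜ, w u v

/-- The lexicographic number of a set `S`: the minimum of `h` over `S`. -/
noncomputable def LN {α : Type*} (h : α → ℕ) (S : Finset α) : ℕ :=
  sInf (h '' (S : Set α))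

/-- Lexicographic `≤` on triples `(cut value, lexicographic number, priority)`. -/
def Lex3Le (a b : NNReal × ℕ × ℕ) : Prop :=
  a.1 < b.1 ∨ (a.1 = b.1 ∧ (a.2.1 < b.2.1 ∨ (a.2.1 = b.2.1 ∧ a.2.2 ≤ b.2.2)))

/-- The weight between two blocks of the contracted graph `G/𝒫`. -/
noncomputable def wH {V : Type*} [DecidableEq V]
    (w : V → V → NNReal) (B B' : Finset V) : NNReal :=
  if B = B' then 0 else ∑ u ∈ B, ∑ v ∈ B', w u v

/-- The cut value of a collection of blocks `F` in the contracted graph with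
vertex set `parts`. -/
noncomputable def cutH {V : Type*} [DecidableEq V]
    (w : V → V → NNReal) (parts F : Finset (Finset V)) : NNReal :=
  ∑ B ∈ F, ∑ B' ∈ parts \ F, wH w B B'

/-- The tuple `(cut_H(ℱ), min_{B ∈ ℱ} h_H(B), Σ_{B ∈ ℱ} P_H(B))` of a collection
of blocks, where `h_H(B) = min_{x ∈ B} h(x)` and `P_H(B) = |B|`. -/
noncomputable def hTuple {V : Type*} [Fintype V] [DecidableEq V]
    (w : V → V → NNReal) (h : V → ℕ) (parts F : Finset (Finset V)) :
    NNReal × ℕ × ℕ :=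
  (cutH w parts F, LN (fun B : Finset V => LN h B) F, ∑ B ∈ F, B.card)

/-- `F` is a nonempty collection of blocks avoiding `s` that lexicographically
minimizes its tuple among all such collections. -/
noncomputable def IsLexMinH {V : Type*} [Fintype V] [DecidableEq V]
    (w : V → V → NNReal) (h : V → ℕ) (s : V)
    (parts F : Finset (Finset V)) : Prop :=
  F ⊆ parts ∧ F.Nonempty ∧ s ∉ F.biUnion id ∧
    ∀ F' : Finset (Finset V), F' ⊆ parts → F'.Nonempty → s ∉ F'.biUnion id →
      Lex3Le (hTuple w h parts F) (hTuple w h parts F')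

theorem LN_le {α : Type*} (h : α → ℕ) {S : Finset α} {x : α} (hx : x ∈ S) : LN h S ≤ h x :=
  Nat.sInf_le ⟨x, hx, rfl⟩

theorem exists_LN_eq {α : Type*} (h : α → ℕ) {S : Finset α} (hS : S.Nonempty) :
    ∃ x ∈ S, h x = LN h S := by
  obtain ⟨x, hx, hxe⟩ := Nat.sInf_mem (s := h '' (S : Set α)) (hS.to_set.image h)
  exact ⟨x, hx, hxe⟩

theorem LN_biUnion {V : Type*} [DecidableEq V] (h : V → ℕ) {F : Finset (Finset V)}
    (hF : F.Nonempty) (hne : ∀ B ∈ F, B.Nonempty) :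
    LN (fun B : Finset V => LN h B) F = LN h (F.biUnion id) := by
  obtain ⟨B, hB, hBe⟩ := exists_LN_eq (fun B : Finset V => LN h B) hF
  obtain ⟨x, hx, hxe⟩ := exists_LN_eq h (hne B hB)
  have hxU : x ∈ F.biUnion id := mem_biUnion.2 ⟨B, hB, hx⟩
  obtain ⟨y, hy, hye⟩ := exists_LN_eq h ⟨x, hxU⟩
  obtain ⟨C, hC, hyC⟩ := mem_biUnion.1 hy
  apply le_antisymm
  · exact (LN_le (fun B : Finset V => LN h B) hC).trans ((LN_le h hyC).trans hye.le)
  · exact (LN_le h hxU).trans (hxe.trans hBe).le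

/-- The cut value as a sum over all ordered pairs, which allows pair-by-pair comparison of cuts. -/
theorem cutVal_eq_sum_ite {V : Type*} [Fintype V] [DecidableEq V]
    (w : V → V → NNReal) (S : Finset V) :
    cutVal w S = ∑ u, ∑ v, if u ∈ S ∧ v ∉ S then w u v else 0 := by
  unfold cutVal
  rw [← Finset.sum_filter_add_sum_filter_not univ (· ∈ S)
    (fun u => ∑ v, if u ∈ S ∧ v ∉ S then w u v else 0)]
  have h2 : ∑ u ∈ univ.filter (fun u => u ∉ S),
      (∑ v, if u ∈ S ∧ v ∉ S then w u v else 0) = 0 := by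
    refine Finset.sum_eq_zero fun u hu => Finset.sum_eq_zero fun v _ => ?_
    simp [(mem_filter.1 hu).2]
  rw [h2, add_zero]
  have h1 : univ.filter (fun u => u ∈ S) = S := by ext; simp
  rw [h1]
  refine Finset.sum_congr rfl fun u hu => ?_
  have h3 : Sᶜ = univ.filter (fun v => v ∉ S) := by ext; simp
  rw [h3, Finset.sum_filter]
  simp [hu]

/-- Submodularity of the cut function. -/
theorem cutVal_inter_add_union_le {V : Type*} [Fintype V] [DecidableEq V]
    (w : V → V → NNReal) (S T : Finset V) :
    cutVal w (S ∩ T) + cutVal w (S ∪ T) ≤ cutVal w S + cutVal w T := by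
  simp only [cutVal_eq_sum_ite, ← Finset.sum_add_distrib]
  refine Finset.sum_le_sum fun u _ => Finset.sum_le_sum fun v _ => ?_
  by_cases h1 : u ∈ S <;> by_cases h2 : u ∈ T <;> by_cases h3 : v ∈ S <;>
    by_cases h4 : v ∈ T <;> simp [h1, h2, h3, h4]

theorem Lex3Le.antisymm {a b : NNReal × ℕ × ℕ} (hab : Lex3Le a b) (hba : Lex3Le b a) : a = b := by
  obtain ⟨a1, a2, a3⟩ := a
  obtain ⟨b1, b2, b3⟩ := b
  simp only [Lex3Le] at hab hba
  simp only [Prod.mk.injEq]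
  rcases hab with h | ⟨rfl, h⟩
  · rcases hba with h' | ⟨h', _⟩
    · exact absurd h' h.not_gt
    · exact absurd h' h.ne'
  · rcases hba with h' | ⟨_, h'⟩
    · exact absurd h' (lt_irrefl _)
    · exact ⟨rfl, by omega, by omega⟩

theorem Lex3Le.fst_le {a b : NNReal × ℕ × ℕ} (hab : Lex3Le a b) : a.1 ≤ b.1 := by
  rcases hab with h | ⟨h, _⟩
  exacts [h.le, h.le]

/-- The lexicographically first minimum cut is unique: a set avoiding `s` with the same tuple
as a minimizer coincides with it. -/
theorem eq_of_minimizers {V : Type*} [Fintype V] [DecidableEq V]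
    (w : V → V → NNReal) (s : V) (h : V → ℕ)
    (hinj : ∀ a b, a ≠ s → b ≠ s → h a = h b → a = b) {S T : Finset V}
    (hS : S.Nonempty) (hsS : s ∉ S)
    (hmin : ∀ T : Finset V, T.Nonempty → s ∉ T →
      Lex3Le (cutVal w S, LN h S, S.card) (cutVal w T, LN h T, T.card))
    (hT : T.Nonempty) (hsT : s ∉ T) (hcut : cutVal w T = cutVal w S)
    (hLN : LN h T = LN h S) (hcard : T.card = S.card) : T = S := by
  obtain ⟨x, hxS, hx⟩ := exists_LN_eq h hS
  obtain ⟨y, hyT, hy⟩ := exists_LN_eq h hT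
  obtain rfl : x = y := hinj x y (fun e => hsS (e ▸ hxS)) (fun e => hsT (e ▸ hyT))
    (hx.trans (hLN.symm.trans hy.symm))
  have hxI : x ∈ S ∩ T := mem_inter.2 ⟨hxS, hyT⟩
  have hI := hmin (S ∩ T) ⟨x, hxI⟩ (fun hs => hsS (mem_inter.1 hs).1)
  have hU := (hmin (S ∪ T) ⟨x, mem_union_left _ hxS⟩
    (fun hs => (mem_union.1 hs).elim hsS hsT)).fst_le
  have hsub := cutVal_inter_add_union_le w S T
  -- As `S ∪ T` cuts at least the minimum, submodularity leaves at most the minimum for `S ∩ T`.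
  have hIle : cutVal w (S ∩ T) ≤ cutVal w S := by
    rw [hcut] at hsub
    exact le_of_add_le_add_right (hsub.trans (add_le_add_right hU _))
  have hLNI : LN h (S ∩ T) ≤ LN h S := (LN_le h hxI).trans hx.le
  have hIcard : S.card ≤ (S ∩ T).card := by
    simp only [Lex3Le] at hI
    rcases hI with h1 | ⟨_, h1 | ⟨_, h1⟩⟩
    · exact absurd hIle h1.not_ge
    · exact absurd hLNI h1.not_ge
    · exact h1
  have hIS : S ∩ T = S := eq_of_subset_of_card_le inter_subset_left hIcard
  exact (eq_of_subset_of_card_le (inter_eq_left.1 hIS) hcard.le).symm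

theorem cutH_eq {V : Type*} [Fintype V] [DecidableEq V] (w : V → V → NNReal)
    (P : Finpartition (univ : Finset V)) {F : Finset (Finset V)} (hF : F ⊆ P.parts) :
    cutH w P.parts F = cutVal w (F.biUnion id) := by
  have hcompl : (F.biUnion id)ᶜ = (P.parts \ F).biUnion id := by
    ext x
    simp only [mem_compl, mem_biUnion, mem_sdiff, id]
    constructor
    · intro hx
      obtain ⟨B, hB, hxB⟩ := P.exists_mem (mem_univ x)
      exact ⟨B, ⟨hB, fun hBF => hx ⟨B, hBF, hxB⟩⟩, hxB⟩
    · rintro ⟨B, ⟨hB, hBF⟩, hxB⟩ ⟨C, hC, hxC⟩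
      exact hBF (P.eq_of_mem_parts hB (hF hC) hxB hxC ▸ hC)
  have hd : ∀ G ⊆ P.parts, (G : Set (Finset V)).PairwiseDisjoint id :=
    fun G hG => P.disjoint.subset (coe_subset.2 hG)
  unfold cutH cutVal
  rw [hcompl, Finset.sum_biUnion (hd F hF)]
  refine Finset.sum_congr rfl fun B hB => ?_
  simp only [Finset.sum_biUnion (hd _ sdiff_subset), id]
  rw [Finset.sum_comm]
  refine Finset.sum_congr rfl fun B' hB' => ?_
  have hne : B ≠ B' := fun e => (mem_sdiff.1 hB').2 (e ▸ hB)
  rw [wH, if_neg hne]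

/-- The tuple of a collection of blocks in the contraction is the tuple of its union in the
original graph. -/
theorem hTuple_eq {V : Type*} [Fintype V] [DecidableEq V] (w : V → V → NNReal) (h : V → ℕ)
    (P : Finpartition (univ : Finset V)) {F : Finset (Finset V)} (hF : F ⊆ P.parts)
    (hne : F.Nonempty) :
    hTuple w h P.parts F =
      (cutVal w (F.biUnion id), LN h (F.biUnion id), (F.biUnion id).card) := by
  unfold hTuple
  rw [cutH_eq w P hF, LN_biUnion h hne fun B hB => P.nonempty_of_mem_parts (hF hB),
    Finset.card_biUnion (P.disjoint.subset (coe_subset.2 hF))]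
  rfl

theorem biUnion_nonempty_of_parts {V : Type*} [Fintype V] [DecidableEq V]
    (P : Finpartition (univ : Finset V)) {F : Finset (Finset V)} (hF : F ⊆ P.parts)
    (hne : F.Nonempty) : (F.biUnion id).Nonempty := by
  obtain ⟨B, hB⟩ := hne
  obtain ⟨x, hx⟩ := P.nonempty_of_mem_parts (hF hB)
  exact ⟨x, mem_biUnion.2 ⟨B, hB, hx⟩⟩

/-- A collection of blocks is recovered from its union as the blocks contained in it. -/
theorem eq_filter_subset_biUnion {V : Type*} [Fintype V] [DecidableEq V]
    (P : Finpartition (univ : Finset V)) {F : Finset (Finset V)} (hF : F ⊆ P.parts) :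
    F = P.parts.filter (fun B => B ⊆ F.biUnion id) := by
  ext B
  rw [mem_filter]
  constructor
  · exact fun hB => ⟨hF hB, subset_biUnion_of_mem id hB⟩
  · rintro ⟨hB, hsub⟩
    obtain ⟨x, hx⟩ := P.nonempty_of_mem_parts hB
    obtain ⟨C, hC, hxC⟩ := mem_biUnion.1 (hsub hx)
    exact P.eq_of_mem_parts hB (hF hC) hx hxC ▸ hC

/-- If `S*` is the lexicographically-first minimum cut of `G` and `𝒫` is a
partition whose blocks refine `S*`, then `ℱ* = {B ∈ 𝒫 : B ⊆ S*}` is the unique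
lexicographically-first collection of blocks in the contraction, and `∪ℱ* = S*`. -/
theorem stmt16 {V : Type*} [Fintype V] [DecidableEq V]
    (hV : 2 ≤ Fintype.card V)
    (w : V → V → NNReal) (hsymm : ∀ u v, w u v = w v u) (hdiag : ∀ v, w v v = 0)
    (s : V) (h : V → ℕ) (hinj : ∀ a b, a ≠ s → b ≠ s → h a = h b → a = b)
    (Sstar : Finset V)
    (hSstar : Sstar.Nonempty ∧ s ∉ Sstar ∧
      ∀ T : Finset V, T.Nonempty → s ∉ T →
        Lex3Le (cutVal w Sstar, LN h Sstar, Sstar.card)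
          (cutVal w T, LN h T, T.card))
    (P : Finpartition (Finset.univ : Finset V))
    (hunion : Sstar = (P.parts.filter (fun B => B ⊆ Sstar)).biUnion id) :
    IsLexMinH w h s P.parts (P.parts.filter (fun B => B ⊆ Sstar)) ∧
    (∀ F : Finset (Finset V), IsLexMinH w h s P.parts F →
      F = P.parts.filter (fun B => B ⊆ Sstar)) ∧
    (P.parts.filter (fun B => B ⊆ Sstar)).biUnion id = Sstar := by
  obtain ⟨hne, hs, hmin⟩ := hSstar
  have hsubF : P.parts.filter (fun B => B ⊆ Sstar) ⊆ P.parts := filter_subset _ _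
  have hneF : (P.parts.filter (fun B => B ⊆ Sstar)).Nonempty := by
    obtain ⟨x, hx⟩ := hne
    rw [hunion] at hx
    obtain ⟨B, hB, _⟩ := mem_biUnion.1 hx
    exact ⟨B, hB⟩
  have htup := hTuple_eq w h P hsubF hneF
  rw [← hunion] at htup
  refine ⟨⟨hsubF, hneF, hunion ▸ hs, fun F' hF' hne' hs' => ?_⟩, ?_, hunion.symm⟩
  · rw [htup, hTuple_eq w h P hF' hne']
    exact hmin _ (biUnion_nonempty_of_parts P hF' hne') hs'
  · rintro F ⟨hF, hFne, hsF, hFmin⟩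
    have hUne := biUnion_nonempty_of_parts P hF hFne
    have hle := hFmin _ hsubF hneF (hunion ▸ hs)
    rw [htup, hTuple_eq w h P hF hFne] at hle
    have heq := hle.antisymm (hmin _ hUne hsF)
    simp only [Prod.mk.injEq] at heq
    have hU := eq_of_minimizers w s h hinj hne hs hmin hUne hsF heq.1 heq.2.1 heq.2.2
    have hfil := eq_filter_subset_biUnion P hF
    rwa [hU] at hfil
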